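/- For a positive integer n, let σ be a generator of Gal(F_{q^n}/F_q) and let D_n denote the number of triples (c_0, c_1, c_3) ∈ F_{q^n}³ such that the F_q-linear map x ↦ c_0·x + c_1·σ(x) + c_3·σ³(x) on F_{q^n} has kernel of F_q-dimension exactly 3 (i.e., the number of codewords of rank weight n−3 in the rank-metric code ⟨x, x^σ, x^{σ³}⟩_{F_{q^n}}). Then: D_4 = D_5 = 0; D_6 = (q^6−1)(q^3+1); D_7 = 0 if q is odd and D_7 = (q^7−1)²/(q−1) if q is even; and D_8 = 0 if q ≡ 1 (mod 3), D_8 = (q^8−1)²/(q−1) if q ≡ 0 (mod 3), and D_8 = 2(q^8−1)²/(q−1) if q ≡ 2 (mod 3). -/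

import Mathlib

/-- The number of triples `(c₀, c₁, c₃) ∈ F_{q^n}³` such that the `F_q`-linear map
`x ↦ c₀·x + c₁·σ(x) + c₃·σ³(x)` has kernel of `F_q`-dimension exactly `3`, i.e. the
number of codewords of rank weight `n - 3` in `⟨x, x^σ, x^{σ³}⟩_{F_{q^n}}`. -/
noncomputable def weightCount3 (K L : Type*) [Field K] [Field L] [Algebra K L]
    (σ : L ≃ₐ[K] L) : ℕ :=
  Nat.card {c : L × L × L //
    Module.finrank K
      (LinearMap.ker
        (LinearMap.mulLeft K c.1 + LinearMap.mulLeft K c.2.1 ∘ₗ σ.toLinearMap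
          + LinearMap.mulLeft K c.2.2 ∘ₗ (σ ^ 3 : L ≃ₐ[K] L).toLinearMap)) = 3}

set_option linter.all false


section
variable {K L : Type*} [Field K] [Field L] [Fintype K] [Fintype L] [Algebra K L]

theorem aux_fix {n s : ℕ} (hL : Fintype.card L = Fintype.card K ^ n)
    (hsn : Nat.gcd s n = 1) (σ : L ≃ₐ[K] L)
    (hσ : ∀ x : L, σ x = x ^ Fintype.card K ^ s) (x : L) (hx : σ x = x) :
    x ^ Fintype.card K = x := by
  have key : ∀ k, (fun y : L => y ^ Fintype.card K)^[k] x = x ^ Fintype.card K ^ k := by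
    intro k
    induction k with
    | zero => simp
    | succ k ih => rw [Function.iterate_succ_apply', ih, ← pow_mul, pow_succ]
  have h1 : Function.IsPeriodicPt (fun y : L => y ^ Fintype.card K) s x := by
    unfold Function.IsPeriodicPt Function.IsFixedPt
    rw [key, ← hσ, hx]
  have h2 : Function.IsPeriodicPt (fun y : L => y ^ Fintype.card K) n x := by
    unfold Function.IsPeriodicPt Function.IsFixedPt
    rw [key, ← hL, FiniteField.pow_card]
  have h3 := h1.gcd h2
  rw [hsn] at h3
  simpa [Function.IsPeriodicPt, Function.IsFixedPt] using h3

theorem aux_fix_dim {n s : ℕ} (hL : Fintype.card L = Fintype.card K ^ n)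
    (hsn : Nat.gcd s n = 1) (σ : L ≃ₐ[K] L)
    (hσ : ∀ x : L, σ x = x ^ Fintype.card K ^ s) (x : L) (hx : σ x = x) :
    ∃ k : K, algebraMap K L k = x := by
  classical
  have h := aux_fix hL hsn σ hσ x hx
  have hq : 1 < Fintype.card K := Fintype.one_lt_card
  have hne : (Polynomial.X ^ Fintype.card K - Polynomial.X : Polynomial L) ≠ 0 :=
    FiniteField.X_pow_card_sub_X_ne_zero L hq
  have hdeg := FiniteField.X_pow_card_sub_X_natDegree_eq L hq
  set P : Polynomial L := Polynomial.X ^ Fintype.card K - Polynomial.X with hP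
  have hsub : Finset.univ.image (algebraMap K L) ⊆ P.roots.toFinset := by
    intro y hy
    obtain ⟨k, -, rfl⟩ := Finset.mem_image.1 hy
    rw [Multiset.mem_toFinset, Polynomial.mem_roots hne]
    simp [hP, Polynomial.IsRoot, ← map_pow, FiniteField.pow_card]
  have hc : P.roots.toFinset.card ≤ (Finset.univ.image (algebraMap K L)).card := by
    rw [Finset.card_image_of_injective _ (algebraMap K L).injective, Finset.card_univ]
    calc _ ≤ _ := Multiset.toFinset_card_le _
      _ ≤ _ := Polynomial.card_roots' _
      _ = _ := hdeg
  have he := Finset.eq_of_subset_of_card_le hsub hc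
  have : x ∈ P.roots.toFinset := by
    rw [Multiset.mem_toFinset, Polynomial.mem_roots hne]
    simp [hP, Polynomial.IsRoot, h]
  rw [← he] at this
  obtain ⟨k, -, hk⟩ := Finset.mem_image.1 this
  exact ⟨k, hk⟩

theorem aux_deg (σ : L ≃ₐ[K] L)
    (hfix : ∀ x, σ x = x → ∃ k : K, algebraMap K L k = x) :
    ∀ (d : ℕ) (c : ℕ → L), c d ≠ 0 → ∀ V : Submodule K L,
      (∀ x ∈ V, ∑ i ∈ Finset.range (d + 1), c i * (σ ^ i) x = 0) →
      Module.finrank K V ≤ d := by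
  intro d
  induction d with
  | zero =>
    intro c hc V hV
    have : V = ⊥ := by
      rw [eq_bot_iff]
      intro x hx
      have := hV x hx
      simpa [hc] using this
    subst this
    simp
  | succ d ih =>
    intro c hc V hV
    by_cases hb : V = ⊥
    · subst hb; simp
    obtain ⟨v, hv, hv0⟩ := Submodule.exists_mem_ne_zero_of_ne_bot hb
    set c' : ℕ → L := fun i => c i * (σ ^ i) v with hc'
    set e : ℕ → L := fun j => - ∑ i ∈ Finset.range (j + 1), c' i with he
    have hsum : ∑ i ∈ Finset.range (d + 2), c' i = 0 := hV v hv
    have hed : e d = c' (d + 1) := by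
      rw [Finset.sum_range_succ] at hsum
      simp only [he]
      linear_combination -hsum
    -- the map
    let T : L →ₗ[K] L := (σ.toLinearMap - LinearMap.id) ∘ₗ LinearMap.mulLeft K v⁻¹
    have hT : ∀ x, T x = σ (v⁻¹ * x) - v⁻¹ * x := fun x => by simp [T]
    have hker : Module.finrank K (LinearMap.ker (T.domRestrict V)) ≤ 1 := by
      refine finrank_le_one (⟨⟨v, hv⟩, ?_⟩) ?_
      · rw [LinearMap.mem_ker, LinearMap.domRestrict_apply, hT]
        simp [hv0]
      · rintro ⟨⟨w, hw⟩, hw'⟩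
        rw [LinearMap.mem_ker, LinearMap.domRestrict_apply, hT, sub_eq_zero] at hw'
        obtain ⟨k, hk⟩ := hfix _ hw'
        refine ⟨k, ?_⟩
        ext
        simp only [SetLike.mk_smul_mk, Algebra.smul_def, hk]
        field_simp
    have hran : Module.finrank K (LinearMap.range (T.domRestrict V)) ≤ d := by
      apply ih e
      · rw [hed]
        exact mul_ne_zero hc ((EmbeddingLike.map_ne_zero_iff (f := σ ^ (d + 1))).2 hv0)
      · rintro _ ⟨⟨w, hw⟩, rfl⟩
        rw [LinearMap.domRestrict_apply, hT]
        have hw' := hV w hw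
        set y := v⁻¹ * w with hy
        have hwy : w = v * y := by rw [hy]; field_simp
        have abel : ∀ m, ∑ i ∈ Finset.range m, e i * (σ ^ i) (σ y - y)
            = ∑ i ∈ Finset.range m, c' i * (σ ^ i) y
              - (∑ i ∈ Finset.range m, c' i) * (σ ^ m) y := by
          intro m
          induction m with
          | zero => simp
          | succ m ihm =>
            rw [Finset.sum_range_succ, ihm, Finset.sum_range_succ, Finset.sum_range_succ]
            have : (σ ^ m) (σ y) = (σ ^ (m + 1)) y := by
              rw [pow_succ]; rfl
            simp only [he, map_sub, this, Finset.sum_range_succ]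
            ring
        rw [abel]
        rw [Finset.sum_range_succ] at hw' hsum
        simp only [hwy, map_mul] at hw'
        simp only [hc'] at hsum ⊢
        have h3 : ∀ i, c i * (σ ^ i) v * (σ ^ i) y = c i * ((σ ^ i) v * (σ ^ i) y) :=
          fun i => by ring
        simp only [h3]
        linear_combination hw' - (σ ^ (d + 1)) y * hsum
    have := LinearMap.finrank_range_add_finrank_ker (T.domRestrict V)
    omega
end

section
variable {K L : Type*} [Field K] [Field L] [Fintype K] [Fintype L] [Algebra K L]

theorem aux_prim (m : ℕ) (h : m ∣ Fintype.card L - 1) : ∃ ζ : L, IsPrimitiveRoot ζ m := by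
  obtain ⟨g, hg⟩ := IsCyclic.exists_ofOrder_eq_natCard (α := Lˣ)
  have hc : Nat.card Lˣ = Fintype.card L - 1 := by
    rw [Nat.card_units, Nat.card_eq_fintype_card]
  have hpos : 0 < Fintype.card L - 1 := by
    have := Fintype.one_lt_card (α := L); omega
  obtain ⟨k, hk⟩ := h
  have h1 : IsPrimitiveRoot g (Fintype.card L - 1) := by
    rw [← hc, ← hg]; exact IsPrimitiveRoot.orderOf g
  have h2 := h1.pow hpos (a := k) (b := m) (by rw [hk, mul_comm])
  exact ⟨((g ^ k : Lˣ) : L), IsPrimitiveRoot.coe_units_iff.2 h2⟩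

theorem aux_count (m : ℕ) (hm : 0 < m) (h : m ∣ Fintype.card L - 1) :
    Nat.card {a : L // a ^ m = 1} = m := by
  classical
  obtain ⟨ζ, hζ⟩ := aux_prim (L := L) m h
  have := hζ.card_nthRootsFinset
  rw [Nat.card_congr (Equiv.subtypeEquivRight
    (fun a => (Polynomial.mem_nthRootsFinset hm (1 : L) (x := a)).symm))]
  rw [Nat.card_eq_fintype_card, Fintype.card_coe, this]

theorem aux_pow {s : ℕ} (σ : L ≃ₐ[K] L)
    (hσ : ∀ x : L, σ x = x ^ Fintype.card K ^ s) (i : ℕ) (x : L) :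
    (σ ^ i) x = x ^ Fintype.card K ^ (s * i) := by
  induction i with
  | zero => simp
  | succ i ih => rw [pow_succ', AlgEquiv.mul_apply, ih, hσ, ← pow_mul, ← pow_add]; ring_nf

theorem aux_per0 {n s : ℕ} (hL : Fintype.card L = Fintype.card K ^ n) (j : ℕ) (x : L) :
    x ^ Fintype.card K ^ (j % n) = x ^ Fintype.card K ^ j := by
  conv_rhs => rw [← Nat.div_add_mod j n, pow_add, pow_mul, pow_mul, ← hL, FiniteField.pow_card_pow]

theorem aux_per {n s : ℕ} (hL : Fintype.card L = Fintype.card K ^ n) (σ : L ≃ₐ[K] L)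
    (hσ : ∀ x : L, σ x = x ^ Fintype.card K ^ s) (j : ℕ) (x : L) :
    (σ ^ (j + n)) x = (σ ^ j) x := by
  rw [aux_pow σ hσ, aux_pow σ hσ, mul_add, pow_add, pow_mul, mul_comm s n, pow_mul _ n, ← hL,
    FiniteField.pow_card_pow]

theorem aux_norm {n s : ℕ} (hn : 0 < n) (hL : Fintype.card L = Fintype.card K ^ n)
    (hsn : Nat.gcd s n = 1) (σ : L ≃ₐ[K] L)
    (hσ : ∀ x : L, σ x = x ^ Fintype.card K ^ s) (x : L) :
    ∏ i ∈ Finset.range n, (σ ^ i) x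
      = x ^ ((Fintype.card K ^ n - 1) / (Fintype.card K - 1)) := by
  rw [← Nat.geomSum_eq Fintype.one_lt_card, ← Finset.prod_pow_eq_pow_sum]
  have hinj : Set.InjOn (fun i => s * i % n) (Finset.range n : Set ℕ) := by
    intro i hi j hj hij
    have h1 : s * i ≡ s * j [MOD n] := hij
    have h2 := Nat.ModEq.cancel_left_of_coprime (by rwa [Nat.gcd_comm]) h1
    simp at hi hj
    exact Nat.ModEq.eq_of_lt_of_lt h2 hi hj
  have him : (Finset.range n).image (fun i => s * i % n) = Finset.range n := by
    apply Finset.eq_of_subset_of_card_le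
    · intro i hi
      obtain ⟨j, -, rfl⟩ := Finset.mem_image.1 hi
      exact Finset.mem_range.2 (Nat.mod_lt _ hn)
    · rw [Finset.card_image_of_injOn hinj]
  conv_rhs => rw [← him, Finset.prod_image hinj]
  refine Finset.prod_congr rfl fun i _ => ?_
  rw [aux_pow σ hσ, aux_per0 (s := s) hL]

/-- dimension of the kernel -/
noncomputable def kdim (σ : L ≃ₐ[K] L) (c : L × L × L) : ℕ :=
  Module.finrank K
      (LinearMap.ker
        (LinearMap.mulLeft K c.1 + LinearMap.mulLeft K c.2.1 ∘ₗ σ.toLinearMap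
          + LinearMap.mulLeft K c.2.2 ∘ₗ (σ ^ 3 : L ≃ₐ[K] L).toLinearMap))

theorem aux_mem (σ : L ≃ₐ[K] L) (c : L × L × L) (x : L) : x ∈ (LinearMap.ker
        (LinearMap.mulLeft K c.1 + LinearMap.mulLeft K c.2.1 ∘ₗ σ.toLinearMap
          + LinearMap.mulLeft K c.2.2 ∘ₗ (σ ^ 3 : L ≃ₐ[K] L).toLinearMap)) ↔
    c.1 * x + c.2.1 * σ x + c.2.2 * (σ ^ 3) x = 0 := by
  rw [LinearMap.mem_ker]; rfl

theorem aux_finrank {n : ℕ} (hL : Fintype.card L = Fintype.card K ^ n) :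
    Module.finrank K L = n := by
  have := Module.card_eq_pow_finrank (K := K) (V := L)
  rw [hL] at this
  exact (Nat.pow_right_injective Fintype.one_lt_card this).symm

theorem aux_low (σ : L ≃ₐ[K] L)
    (hfix : ∀ x, σ x = x → ∃ k : K, algebraMap K L k = x) (V : Submodule K L)
    (hV : Module.finrank K V = 3) (A B C : L)
    (h : ∀ x ∈ V, A * x + B * σ x + C * (σ ^ 2) x = 0) : A = 0 ∧ B = 0 ∧ C = 0 := by
  have hC : C = 0 := by
    by_contra hC
    have := aux_deg σ hfix 2 (fun i => if i = 0 then A else if i = 1 then B else C)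
      (by simpa using hC) V (fun x hx => by
        have := h x hx
        simpa [Finset.sum_range_succ] using this)
    omega
  have hB : B = 0 := by
    by_contra hB
    have := aux_deg σ hfix 1 (fun i => if i = 0 then A else B)
      (by simpa using hB) V (fun x hx => by
        have := h x hx
        simpa [Finset.sum_range_succ, hC] using this)
    omega
  have hA : A = 0 := by
    by_contra hA
    have := aux_deg σ hfix 0 (fun i => A)
      (by simpa using hA) V (fun x hx => by
        have := h x hx
        simpa [Finset.sum_range_succ, hC, hB] using this)
    omega
  exact ⟨hA, hB, hC⟩

theorem aux_up (σ : L ≃ₐ[K] L)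
    (hfix : ∀ x, σ x = x → ∃ k : K, algebraMap K L k = x) (a b : L) :
    kdim σ (-a, -b, 1) ≤ 3 := by
  apply aux_deg σ hfix 3 (fun i => if i = 0 then -a else if i = 1 then -b else if i = 2 then 0 else 1)
  · simp
  · intro x hx
    rw [aux_mem] at hx
    simpa [Finset.sum_range_succ] using hx

theorem aux_back {d n : ℕ} (hL : Fintype.card L = Fintype.card K ^ n) (hd : d + 3 = n) (σ : L ≃ₐ[K] L)
    (hfix : ∀ x, σ x = x → ∃ k : K, algebraMap K L k = x) (a b : L) (c : ℕ → L) (hc : c d ≠ 0)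
    (h : ∀ x, ∑ i ∈ Finset.range (d + 1), c i * (σ ^ i) (-a * x + -b * σ x + 1 * (σ ^ 3) x) = 0) :
    kdim σ (-a, -b, 1) = 3 := by
  have h1 := aux_up σ hfix a b
  have h2 := LinearMap.finrank_range_add_finrank_ker (LinearMap.mulLeft K (-a) + LinearMap.mulLeft K (-b) ∘ₗ σ.toLinearMap
          + LinearMap.mulLeft K 1 ∘ₗ (σ ^ 3 : L ≃ₐ[K] L).toLinearMap)
  rw [aux_finrank hL] at h2
  have h3 := aux_deg σ hfix d c hc (LinearMap.range (LinearMap.mulLeft K (-a) + LinearMap.mulLeft K (-b) ∘ₗ σ.toLinearMap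
          + LinearMap.mulLeft K 1 ∘ₗ (σ ^ 3 : L ≃ₐ[K] L).toLinearMap)) (by
      rintro _ ⟨x, rfl⟩
      exact h x)
  unfold kdim at h1 ⊢
  dsimp only at h1 ⊢
  omega

theorem aux_red {n : ℕ} (hn : 4 ≤ n) (hL : Fintype.card L = Fintype.card K ^ n) (σ : L ≃ₐ[K] L)
    (hfix : ∀ x, σ x = x → ∃ k : K, algebraMap K L k = x) :
    weightCount3 K L σ = (Fintype.card K ^ n - 1) *
      Nat.card {ab : L × L // kdim σ (-ab.1, -ab.2, 1) = 3} := by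
  have hsc : ∀ (u : L) (hu : u ≠ 0) (x y z : L), kdim σ (u * x, u * y, u * z) = kdim σ (x, y, z) := by
    intro u hu x y z
    unfold kdim
    refine congrArg (fun V : Submodule K L => Module.finrank K V) ?_
    ext w
    rw [aux_mem, aux_mem]
    dsimp only
    rw [show u * x * w + u * y * σ w + u * z * (σ ^ 3) w = u * (x * w + y * σ w + z * (σ ^ 3) w) by ring]
    simp [hu]
  have hne : ∀ c : L × L × L, kdim σ c = 3 → c.2.2 ≠ 0 := by
    rintro ⟨c0, c1, c3⟩ h h0
    simp only at h0
    subst h0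
    obtain ⟨rfl, rfl, -⟩ := aux_low σ hfix _ h c0 c1 0 (fun x hx => by
      rw [aux_mem] at hx
      simpa using hx)
    have : (LinearMap.ker
        (LinearMap.mulLeft K (0:L) + LinearMap.mulLeft K (0:L) ∘ₗ σ.toLinearMap
          + LinearMap.mulLeft K (0:L) ∘ₗ (σ ^ 3 : L ≃ₐ[K] L).toLinearMap)) = ⊤ := by
      rw [eq_top_iff]
      intro x _
      rw [aux_mem σ (0,0,0)]
      simp
    unfold kdim at h
    dsimp only at h
    rw [this, finrank_top, aux_finrank hL] at h
    omega
  have hdiv : ∀ c0 c1 c3 : L, kdim σ (c0, c1, c3) = 3 → 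
      kdim σ (-(-c0 / c3), -(-c1 / c3), 1) = 3 := by
    intro c0 c1 c3 h
    have h0 : c3 ≠ 0 := hne _ h
    rw [← hsc c3 h0, ← h]
    congr 2
    · field_simp
    · congr 1
      · field_simp
      · simp
  have e : {c : L × L × L // kdim σ c = 3} ≃ Lˣ × {ab : L × L // kdim σ (-ab.1, -ab.2, 1) = 3} :=
    { toFun := fun c => (Units.mk0 c.1.2.2 (hne _ c.2),
        ⟨(-c.1.1 / c.1.2.2, -c.1.2.1 / c.1.2.2), by
          exact hdiv _ _ _ c.2⟩)
      invFun := fun z => ⟨((z.1 : L) * -z.2.1.1, (z.1 : L) * -z.2.1.2, (z.1 : L) * 1), by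
          rw [hsc _ z.1.ne_zero]; exact z.2.2⟩
      left_inv := fun c => by
        have h0 := hne _ c.2
        ext
        · dsimp only [Units.val_mk0]; field_simp; try ring
        · dsimp only [Units.val_mk0]; field_simp; try ring
        · simp
      right_inv := fun z => by
        obtain ⟨u, ⟨⟨a, b⟩, hz⟩⟩ := z
        have := u.ne_zero
        ext <;> simp }
  have h1 : weightCount3 K L σ = Nat.card {c : L × L × L // kdim σ c = 3} := rfl
  rw [h1, Nat.card_congr e, Nat.card_prod, Nat.card_units, Nat.card_eq_fintype_card, hL]
end

section
variable {K L : Type*} [Field K] [Field L] [Fintype K] [Fintype L] [Algebra K L]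

theorem aux_comp (σ : L ≃ₐ[K] L) (i j : ℕ) (y : L) : (σ ^ i) ((σ ^ j) y) = (σ ^ (i + j)) y := by
  rw [pow_add]; rfl

theorem aux_hk (σ : L ≃ₐ[K] L) (a b x : L) (h : -a * x + -b * σ x + 1 * (σ ^ 3) x = 0) (k : ℕ) :
    (σ ^ (k + 3)) x = (σ ^ k) b * (σ ^ (k + 1)) x + (σ ^ k) a * (σ ^ k) x := by
  have h1 : (σ ^ 3) x = b * (σ ^ 1) x + a * x := by rw [pow_one]; linear_combination h
  have h2 := congrArg (σ ^ k) h1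
  simpa only [map_add, map_mul, aux_comp] using h2

theorem aux_g (σ : L ≃ₐ[K] L) (a b x : L) (k : ℕ) :
    (σ ^ k) (-a * x + -b * σ x + 1 * (σ ^ 3) x) =
     (σ ^ (k + 3)) x - (σ ^ k) b * (σ ^ (k + 1)) x - (σ ^ k) a * (σ ^ k) x := by
  have : -a * x + -b * σ x + 1 * (σ ^ 3) x = (σ ^ 3) x - b * (σ ^ 1) x - a * x := by
    rw [pow_one]; ring
  rw [this]
  simp only [map_sub, map_mul, aux_comp]

theorem crit4 (hL : Fintype.card L = Fintype.card K ^ 4) (σ : L ≃ₐ[K] L)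
    (hfix : ∀ x, σ x = x → ∃ k : K, algebraMap K L k = x)
    (hper : ∀ j x, (σ ^ (j + 4)) x = (σ ^ j) x) (a b : L) : kdim σ (-a, -b, 1) ≠ 3 := by
  intro h
  obtain ⟨h1, h2, h3⟩ := aux_low σ hfix _ h (-1) ((σ ^ 1) a) ((σ ^ 1) b) (fun x hx => by
    rw [aux_mem] at hx
    have hk := aux_hk σ a b x hx
    have k1 := hk 1
    have k4 : (σ ^ 4) x = x := by simpa only [zero_add, pow_zero, AlgEquiv.one_apply] using hper 0 x
    have k5 : (σ ^ 1) x = σ x := by rw [pow_one]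
    norm_num only at k1
    linear_combination k4 - k1 - (σ ^ 1) a * k5)
  simp at h1

theorem crit5 (hL : Fintype.card L = Fintype.card K ^ 5) (σ : L ≃ₐ[K] L)
    (hfix : ∀ x, σ x = x → ∃ k : K, algebraMap K L k = x)
    (hper : ∀ j x, (σ ^ (j + 5)) x = (σ ^ j) x) (a b : L) : kdim σ (-a, -b, 1) ≠ 3 := by
  intro h
  obtain ⟨h1, h2, h3⟩ := aux_low σ hfix _ h (a * (σ ^ 2) b - 1) (b * (σ ^ 2) b) ((σ ^ 2) a)
   (fun x hx => by
    rw [aux_mem] at hx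
    have hk := aux_hk σ a b x hx
    have k0 := hk 0
    have k2 := hk 2
    have k4 : (σ ^ 5) x = x := by simpa only [zero_add, pow_zero, AlgEquiv.one_apply] using hper 0 x
    have k5 : (σ ^ 1) x = σ x := by rw [pow_one]
    norm_num only [pow_zero, AlgEquiv.one_apply] at k0 k2
    rw [k5] at k0
    linear_combination k4 - k2 - (σ ^ 2) b * k0)
  have h4 : a = 0 := by
    exact (EmbeddingLike.map_eq_zero_iff (f := σ ^ 2)).1 h3
  rw [h4] at h1
  simp at h1

theorem crit6 (hL : Fintype.card L = Fintype.card K ^ 6) (σ : L ≃ₐ[K] L)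
    (hfix : ∀ x, σ x = x → ∃ k : K, algebraMap K L k = x)
    (hper : ∀ j x, (σ ^ (j + 6)) x = (σ ^ j) x) (a b : L) : kdim σ (-a, -b, 1) = 3 ↔
      b = 0 ∧ a * (σ ^ 3) a = 1 := by
  have k6 : ∀ x, (σ ^ 6) x = x := fun x => by
    simpa only [zero_add, pow_zero, AlgEquiv.one_apply] using hper 0 x
  constructor
  · intro h
    obtain ⟨h1, h2, h3⟩ := aux_low σ hfix _ h (a * (σ ^ 3) a - 1)
      ((σ ^ 3) a * b + (σ ^ 1) a * (σ ^ 3) b) ((σ ^ 1) b * (σ ^ 3) b)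
     (fun x hx => by
      rw [aux_mem] at hx
      have hk := aux_hk σ a b x hx
      have k0 := hk 0
      have k1 := hk 1
      have k3 := hk 3
      have k5 : (σ ^ 1) x = σ x := by rw [pow_one]
      norm_num only [pow_zero, AlgEquiv.one_apply] at k0 k1 k3
      rw [k5] at k0 k1
      linear_combination k6 x - k3 - (σ ^ 3) b * k1 - (σ ^ 3) a * k0)
    have h4 : b = 0 := by
      rcases mul_eq_zero.1 h3 with h | h
      · exact (EmbeddingLike.map_eq_zero_iff (f := σ ^ 1)).1 h
      · exact (EmbeddingLike.map_eq_zero_iff (f := σ ^ 3)).1 h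
    exact ⟨h4, by linear_combination h1⟩
  · rintro ⟨rfl, h⟩
    apply aux_back (d := 3) hL rfl σ hfix a 0
      (fun i => if i = 0 then (σ ^ 3) a else if i = 3 then 1 else 0)
    · simp
    · intro x
      simp only [aux_g, Finset.sum_range_succ, Finset.sum_range_zero]
      norm_num only [pow_zero, AlgEquiv.one_apply, map_zero, if_true, if_false]
      linear_combination k6 x - x * h

theorem crit7 (hL : Fintype.card L = Fintype.card K ^ 7) (σ : L ≃ₐ[K] L)
    (hfix : ∀ x, σ x = x → ∃ k : K, algebraMap K L k = x)
    (hper : ∀ j x, (σ ^ (j + 7)) x = (σ ^ j) x) (a b : L) : kdim σ (-a, -b, 1) = 3 ↔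
      a * (σ ^ 2) b * (σ ^ 4) b = 1 ∧ (σ ^ 1) a * (σ ^ 4) a + b * (σ ^ 2) b * (σ ^ 4) b = 0 ∧
       (σ ^ 4) a * (σ ^ 1) b + (σ ^ 2) a * (σ ^ 4) b = 0 := by
  have k7 : ∀ x, (σ ^ 7) x = x := fun x => by
    simpa only [zero_add, pow_zero, AlgEquiv.one_apply] using hper 0 x
  constructor
  · intro h
    obtain ⟨h1, h2, h3⟩ := aux_low σ hfix _ h (a * (σ ^ 2) b * (σ ^ 4) b - 1)
      ((σ ^ 1) a * (σ ^ 4) a + b * (σ ^ 2) b * (σ ^ 4) b)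
      ((σ ^ 4) a * (σ ^ 1) b + (σ ^ 2) a * (σ ^ 4) b)
     (fun x hx => by
      rw [aux_mem] at hx
      have hk := aux_hk σ a b x hx
      have k0 := hk 0
      have k1 := hk 1
      have k2 := hk 2
      have k4 := hk 4
      have k5 : (σ ^ 1) x = σ x := by rw [pow_one]
      norm_num only [pow_zero, AlgEquiv.one_apply] at k0 k1 k2 k4
      rw [k5] at k0 k1
      linear_combination k7 x - k4 - (σ ^ 4) b * k2 - (σ ^ 4) a * k1 - (σ ^ 4) b * (σ ^ 2) b * k0)
    exact ⟨by linear_combination h1, h2, h3⟩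
  · rintro ⟨h1, h2, h3⟩
    apply aux_back (d := 4) hL rfl σ hfix a b
      (fun i => if i = 0 then (σ ^ 4) b * (σ ^ 2) b else if i = 1 then (σ ^ 4) a else
         if i = 2 then (σ ^ 4) b else if i = 4 then 1 else 0)
    · simp
    · intro x
      simp only [aux_g, Finset.sum_range_succ, Finset.sum_range_zero]
      norm_num only [pow_zero, AlgEquiv.one_apply, map_zero, if_true, if_false]
      linear_combination k7 x - x * h1 - (σ ^ 1) x * h2 - (σ ^ 2) x * h3

theorem crit8 (hL : Fintype.card L = Fintype.card K ^ 8) (σ : L ≃ₐ[K] L)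
    (hfix : ∀ x, σ x = x → ∃ k : K, algebraMap K L k = x)
    (hper : ∀ j x, (σ ^ (j + 8)) x = (σ ^ j) x) (a b : L) : kdim σ (-a, -b, 1) = 3 ↔
      a * ((σ ^ 5) a * (σ ^ 2) b + (σ ^ 3) a * (σ ^ 5) b) = 1 ∧
      b * ((σ ^ 5) a * (σ ^ 2) b + (σ ^ 3) a * (σ ^ 5) b) + (σ ^ 1) a * (σ ^ 3) b * (σ ^ 5) b = 0 ∧
       (σ ^ 2) a * (σ ^ 5) a + (σ ^ 1) b * (σ ^ 3) b * (σ ^ 5) b = 0 := by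
  have k8 : ∀ x, (σ ^ 8) x = x := fun x => by
    simpa only [zero_add, pow_zero, AlgEquiv.one_apply] using hper 0 x
  constructor
  · intro h
    obtain ⟨h1, h2, h3⟩ := aux_low σ hfix _ h
      (a * ((σ ^ 5) a * (σ ^ 2) b + (σ ^ 3) a * (σ ^ 5) b) - 1)
      (b * ((σ ^ 5) a * (σ ^ 2) b + (σ ^ 3) a * (σ ^ 5) b) + (σ ^ 1) a * (σ ^ 3) b * (σ ^ 5) b)
      ((σ ^ 2) a * (σ ^ 5) a + (σ ^ 1) b * (σ ^ 3) b * (σ ^ 5) b)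
     (fun x hx => by
      rw [aux_mem] at hx
      have hk := aux_hk σ a b x hx
      have k0 := hk 0
      have k1 := hk 1
      have k2 := hk 2
      have k3 := hk 3
      have k5 := hk 5
      have k9 : (σ ^ 1) x = σ x := by rw [pow_one]
      norm_num only [pow_zero, AlgEquiv.one_apply] at k0 k1 k2 k3 k5
      rw [k9] at k0 k1
      linear_combination k8 x - k5 - (σ ^ 5) b * k3 - (σ ^ 5) a * k2 - (σ ^ 5) b * (σ ^ 3) b * k1
       - ((σ ^ 5) a * (σ ^ 2) b + (σ ^ 3) a * (σ ^ 5) b) * k0)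
    exact ⟨by linear_combination h1, h2, h3⟩
  · rintro ⟨h1, h2, h3⟩
    apply aux_back (d := 5) hL rfl σ hfix a b
      (fun i => if i = 0 then ((σ ^ 5) a * (σ ^ 2) b + (σ ^ 3) a * (σ ^ 5) b)
        else if i = 1 then (σ ^ 5) b * (σ ^ 3) b else
         if i = 2 then (σ ^ 5) a else if i = 3 then (σ ^ 5) b else if i = 5 then 1 else 0)
    · simp
    · intro x
      simp only [aux_g, Finset.sum_range_succ, Finset.sum_range_zero]
      norm_num only [pow_zero, AlgEquiv.one_apply, map_zero, if_true, if_false]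
      linear_combination k8 x - x * h1 - (σ ^ 1) x * h2 - (σ ^ 2) x * h3

theorem alg7 (σ : L ≃ₐ[K] L) (hper : ∀ j x, (σ ^ (j + 7)) x = (σ ^ j) x) (a b : L) :
    (a * (σ ^ 2) b * (σ ^ 4) b = 1 ∧ (σ ^ 1) a * (σ ^ 4) a + b * (σ ^ 2) b * (σ ^ 4) b = 0 ∧
       (σ ^ 4) a * (σ ^ 1) b + (σ ^ 2) a * (σ ^ 4) b = 0) ↔
     (2 : L) = 0 ∧ ∏ i ∈ Finset.range 7, (σ ^ i) b = -1 ∧ a = ((σ ^ 2) b * (σ ^ 4) b)⁻¹ := by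
  have p0 := fun x => hper 0 x
  have p1 := fun x => hper 1 x
  norm_num only [pow_zero, AlgEquiv.one_apply] at p0 p1
  have hsh : a * (σ ^ 2) b * (σ ^ 4) b = 1 → ∀ k, (σ ^ k) a * (σ ^ (k + 2)) b * (σ ^ (k + 4)) b = 1 := by
    intro h k
    have := congrArg (σ ^ k) h
    simpa only [map_mul, map_one, aux_comp] using this
  simp only [Finset.prod_range_succ, Finset.prod_range_zero, pow_zero, AlgEquiv.one_apply, one_mul]
  constructor
  · rintro ⟨h1, h2, h3⟩
    have e1 := hsh h1 1
    have e2 := hsh h1 2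
    have e4 := hsh h1 4
    norm_num only [p0, p1] at e1 e2 e4
    have hb : ∀ k, (σ ^ k) b ≠ 0 := by
      intro k hk
      have : b = 0 := (EmbeddingLike.map_eq_zero_iff (f := σ ^ k)).1 hk
      rw [this] at h1
      simp at h1
    refine ⟨?_, ?_, ?_⟩
    · linear_combination (σ ^ 6) b * h3 - e4 - e2
    · linear_combination (σ ^ 3) b * (σ ^ 5) b * (σ ^ 6) b * (σ ^ 1) b * h2
        - (σ ^ 4) a * (σ ^ 6) b * (σ ^ 1) b * e1 - e4
    · have := hb 2
      have := hb 4
      field_simp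
      linear_combination h1
  · rintro ⟨h1, h2, h3⟩
    have hb : ∀ k, (σ ^ k) b ≠ 0 := by
      intro k hk
      have : b = 0 := (EmbeddingLike.map_eq_zero_iff (f := σ ^ k)).1 hk
      rw [this] at h2
      simp at h2
    have h4 : a * (σ ^ 2) b * (σ ^ 4) b = 1 := by
      have := hb 2
      have := hb 4
      rw [h3]; field_simp
    have e1 := hsh h4 1
    have e2 := hsh h4 2
    have e4 := hsh h4 4
    norm_num only [p0, p1] at e1 e2 e4
    refine ⟨h4, ?_, ?_⟩
    · have : (σ ^ 3) b * (σ ^ 5) b * (σ ^ 6) b * (σ ^ 1) b ≠ 0 := by simp only [ne_eq, mul_eq_zero, hb, or_self, not_false_eq_true]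
      apply mul_left_cancel₀ this
      linear_combination h2 + (σ ^ 4) a * (σ ^ 6) b * (σ ^ 1) b * e1 + e4
    · apply mul_left_cancel₀ (hb 6)
      linear_combination h1 + e4 + e2

theorem alg8f (σ : L ≃ₐ[K] L) (hper : ∀ j x, (σ ^ (j + 8)) x = (σ ^ j) x) (a b : L)
    (h1 : a * ((σ ^ 5) a * (σ ^ 2) b + (σ ^ 3) a * (σ ^ 5) b) = 1)
    (h2 : b * ((σ ^ 5) a * (σ ^ 2) b + (σ ^ 3) a * (σ ^ 5) b) + (σ ^ 1) a * (σ ^ 3) b * (σ ^ 5) b = 0)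
    (h3 : (σ ^ 2) a * (σ ^ 5) a + (σ ^ 1) b * (σ ^ 3) b * (σ ^ 5) b = 0)
    (t : L) (ht : t = a * (σ ^ 3) a * (σ ^ 5) b) :
    (t ^ 2 - t + 1 = 0 ∧ σ t = 1 - t) ∧ ∏ i ∈ Finset.range 8, (σ ^ i) a = 1 ∧
      b = (1 - t) / ((σ ^ 3) a * (σ ^ 6) a) := by
  have p0 := fun x => hper 0 x
  have p1 := fun x => hper 1 x
  have p2 := fun x => hper 2 x
  have p3 := fun x => hper 3 x
  norm_num only [pow_zero, AlgEquiv.one_apply] at p0 p1 p2 p3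
  have hsh : ∀ k, (σ ^ k) t = (σ ^ k) a * (σ ^ (k + 3)) a * (σ ^ (k + 5)) b := by
    intro k
    rw [ht]; simp only [map_mul, aux_comp]
  have t3 := hsh 3
  have t4 := hsh 4
  have t5 := hsh 5
  have t6 := hsh 6
  norm_num only [p0, p1, p2, p3] at t3 t4 t5 t6
  have r1 : (σ ^ 5) t = 1 - t := by rw [t5]; linear_combination h1 + ht
  have r2 : (σ ^ 2) t = t := by
    have := congrArg (fun z => (σ ^ 5) z) r1
    rw [map_sub, map_one, aux_comp] at this
    norm_num only [p2] at this
    rw [this, r1]; ring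
  have r4 : (σ ^ 4) t = t := by rw [← aux_comp σ 2 2, r2, r2]
  have r6 : (σ ^ 6) t = t := by rw [← aux_comp σ 2 4, r4, r2]
  have rr1 : (σ ^ 1) t = 1 - t := by rw [← r1, ← aux_comp σ 1 4, r4]
  have r3 : (σ ^ 3) t = 1 - t := by rw [← rr1, ← aux_comp σ 1 2, r2]
  rw [r3] at t3
  rw [r4] at t4
  rw [r6] at t6
  have ha : ∀ k, (σ ^ k) a ≠ 0 := by
    intro k hk
    have : a = 0 := (EmbeddingLike.map_eq_zero_iff (f := σ ^ k)).1 hk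
    rw [this] at h1
    simp at h1
  have q : t ^ 2 - t + 1 = 0 := by
    have q1 : b + a * ((σ ^ 1) a * (σ ^ 3) b * (σ ^ 5) b) = 0 := by
      linear_combination a * h2 - b * h1
    linear_combination (σ ^ 3) a * (σ ^ 6) a * q1 + t3 + t * t6 + (σ ^ 6) a * (σ ^ 1) a * (σ ^ 3) b * ht
  refine ⟨⟨q, by rwa [pow_one] at rr1⟩, ?_, ?_⟩
  · simp only [Finset.prod_range_succ, Finset.prod_range_zero, pow_zero, AlgEquiv.one_apply, one_mul]
    have q3 : t * t * t = -1 := by linear_combination (t + 1) * q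
    have q4 : ((σ ^ 4) a * (σ ^ 7) a * (σ ^ 1) b) * ((σ ^ 6) a * (σ ^ 1) a * (σ ^ 3) b) *
      (a * (σ ^ 3) a * (σ ^ 5) b) = -1 := by
      rw [← t4, ← t6, ← ht, q3]
    linear_combination a * (σ ^ 1) a * (σ ^ 3) a * (σ ^ 4) a * (σ ^ 6) a * (σ ^ 7) a * h3 - q4
  · have := ha 3
    have := ha 6
    field_simp
    linear_combination -t3

theorem alg8b (σ : L ≃ₐ[K] L) (hper : ∀ j x, (σ ^ (j + 8)) x = (σ ^ j) x) (a b t : L)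
    (q : t ^ 2 - t + 1 = 0) (r1 : σ t = 1 - t) (hN : ∏ i ∈ Finset.range 8, (σ ^ i) a = 1)
    (hb : b = (1 - t) / ((σ ^ 3) a * (σ ^ 6) a)) :
    a * ((σ ^ 5) a * (σ ^ 2) b + (σ ^ 3) a * (σ ^ 5) b) = 1 ∧
    b * ((σ ^ 5) a * (σ ^ 2) b + (σ ^ 3) a * (σ ^ 5) b) + (σ ^ 1) a * (σ ^ 3) b * (σ ^ 5) b = 0 ∧
    (σ ^ 2) a * (σ ^ 5) a + (σ ^ 1) b * (σ ^ 3) b * (σ ^ 5) b = 0 ∧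
    t = a * (σ ^ 3) a * (σ ^ 5) b := by
  have p0 := fun x => hper 0 x
  have p1 := fun x => hper 1 x
  have p2 := fun x => hper 2 x
  have p3 := fun x => hper 3 x
  norm_num only [pow_zero, AlgEquiv.one_apply] at p0 p1 p2 p3
  have rr1 : (σ ^ 1) t = 1 - t := by rwa [pow_one]
  have r2 : (σ ^ 2) t = t := by
    rw [← aux_comp σ 1 1, rr1, map_sub, map_one, rr1]; ring
  have r3 : (σ ^ 3) t = 1 - t := by rw [← rr1, ← aux_comp σ 1 2, r2]
  have r5 : (σ ^ 5) t = 1 - t := by rw [← aux_comp σ 3 2, r2, r3]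
  have ha : ∀ k, (σ ^ k) a ≠ 0 := by
    intro k hk
    have : a = 0 := (EmbeddingLike.map_eq_zero_iff (f := σ ^ k)).1 hk
    rw [this] at hN
    simp at hN
  have hbk : ∀ k, (σ ^ k) b = (1 - (σ ^ k) t) / ((σ ^ (k + 3)) a * (σ ^ (k + 6)) a) := by
    intro k
    rw [hb]; simp only [map_div₀, map_sub, map_one, map_mul, aux_comp]
  have b1 := hbk 1
  have b2 := hbk 2
  have b3 := hbk 3
  have b5 := hbk 5
  norm_num only [p0, p1, p2, p3, rr1, r2, r3, r5] at b1 b2 b3 b5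
  simp only [Finset.prod_range_succ, Finset.prod_range_zero, pow_zero, AlgEquiv.one_apply, one_mul] at hN
  have a0 : a ≠ 0 := ha 0
  have a1 := ha 1
  have a2 := ha 2
  have a3 := ha 3
  have a4 := ha 4
  have a5 := ha 5
  have a6 := ha 6
  have a7 := ha 7
  rw [b1, b2, b3, b5, hb]
  generalize (σ ^ 1) a = A1 at *
  generalize (σ ^ 2) a = A2 at *
  generalize (σ ^ 3) a = A3 at *
  generalize (σ ^ 4) a = A4 at *
  generalize (σ ^ 5) a = A5 at *
  generalize (σ ^ 6) a = A6 at *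
  generalize (σ ^ 7) a = A7 at *
  refine ⟨?_, ?_, ?_, ?_⟩
  · field_simp; ring
  · field_simp; linear_combination q
  · field_simp; linear_combination hN + (t + 1) * q
  · field_simp; ring
end

section
variable {K L : Type*} [Field K] [Field L] [Fintype K] [Fintype L] [Algebra K L]

theorem cnt6 {s : ℕ} (hL : Fintype.card L = Fintype.card K ^ 6) (hsn : Nat.gcd s 6 = 1)
    (σ : L ≃ₐ[K] L) (hσ : ∀ x : L, σ x = x ^ Fintype.card K ^ s) :
    Nat.card {ab : L × L // kdim σ (-ab.1, -ab.2, 1) = 3} = Fintype.card K ^ 3 + 1 := by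
  have hfix := aux_fix_dim hL hsn σ hσ
  have hper := aux_per hL σ hσ
  have hodd : s * 3 % 6 = 3 := by
    have : s % 2 = 1 := by
      by_contra h
      have h2 : 2 ∣ Nat.gcd s 6 := Nat.dvd_gcd (by omega) (by norm_num)
      omega
    omega
  have h3 : ∀ a : L, a * (σ ^ 3) a = a ^ (Fintype.card K ^ 3 + 1) := by
    intro a
    rw [aux_pow σ hσ, ← aux_per0 (s := s) hL, hodd, pow_succ a, mul_comm]
  have hdvd : Fintype.card K ^ 3 + 1 ∣ Fintype.card L - 1 := by
    rw [hL]
    refine ⟨Fintype.card K ^ 3 - 1, ?_⟩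
    rw [← Nat.sq_sub_sq, ← pow_mul]
  rw [← aux_count (L := L) (Fintype.card K ^ 3 + 1) (by positivity) hdvd]
  refine Nat.card_congr
    { toFun := fun z => ⟨z.1.1, by rw [← h3]; exact ((crit6 hL σ hfix hper _ _).1 z.2).2⟩
      invFun := fun a => ⟨(a.1, 0), (crit6 hL σ hfix hper _ _).2 ⟨rfl, by rw [h3]; exact a.2⟩⟩
      left_inv := fun z => by
        have := ((crit6 hL σ hfix hper _ _).1 z.2).1
        ext
        · rfl
        · exact this.symm
      right_inv := fun a => rfl }

theorem dvd_norm {n : ℕ} (hn : 0 < n) (hL : Fintype.card L = Fintype.card K ^ n) :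
    0 < (Fintype.card K ^ n - 1) / (Fintype.card K - 1) ∧
    (Fintype.card K ^ n - 1) / (Fintype.card K - 1) ∣ Fintype.card L - 1 := by
  have h1 := Fintype.one_lt_card (α := K)
  have hd : Fintype.card K - 1 ∣ Fintype.card K ^ n - 1 := Nat.sub_one_dvd_pow_sub_one _ _
  constructor
  · apply Nat.div_pos
    · have := Nat.le_self_pow hn.ne' (Fintype.card K)
      omega
    · omega
  · rw [hL]; exact Nat.div_dvd_of_dvd hd

theorem cnt7 {s : ℕ} (hL : Fintype.card L = Fintype.card K ^ 7) (hsn : Nat.gcd s 7 = 1)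
    (σ : L ≃ₐ[K] L) (hσ : ∀ x : L, σ x = x ^ Fintype.card K ^ s) (h2 : (2 : L) = 0) :
    Nat.card {ab : L × L // kdim σ (-ab.1, -ab.2, 1) = 3} =
      (Fintype.card K ^ 7 - 1) / (Fintype.card K - 1) := by
  have hfix := aux_fix_dim hL hsn σ hσ
  have hper := aux_per hL σ hσ
  have hN := aux_norm (by norm_num) hL hsn σ hσ
  have hcr := fun a b => (crit7 hL σ hfix hper a b).trans (alg7 σ hper a b)
  have hm1 : (-1 : L) = 1 := by linear_combination -h2
  obtain ⟨d1, d2⟩ := dvd_norm (K := K) (L := L) (by norm_num) hL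
  rw [← aux_count (L := L) _ d1 d2]
  refine Nat.card_congr
    { toFun := fun z => ⟨z.1.2, by rw [← hN]; exact ((hcr _ _).1 z.2).2.1.trans hm1⟩
      invFun := fun b => ⟨(((σ ^ 2) b.1 * (σ ^ 4) b.1)⁻¹, b.1), (hcr _ _).2 ⟨h2, by
        rw [hN, hm1]; exact b.2, rfl⟩⟩
      left_inv := fun z => by
        have := ((hcr _ _).1 z.2).2.2
        ext
        · exact this.symm
        · rfl
      right_inv := fun a => rfl }

theorem cnt8 {s : ℕ} (hL : Fintype.card L = Fintype.card K ^ 8) (hsn : Nat.gcd s 8 = 1)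
    (σ : L ≃ₐ[K] L) (hσ : ∀ x : L, σ x = x ^ Fintype.card K ^ s) :
    Nat.card {ab : L × L // kdim σ (-ab.1, -ab.2, 1) = 3} =
      Nat.card {t : L // t ^ 2 - t + 1 = 0 ∧ σ t = 1 - t} *
      ((Fintype.card K ^ 8 - 1) / (Fintype.card K - 1)) := by
  have hfix := aux_fix_dim hL hsn σ hσ
  have hper := aux_per hL σ hσ
  have hN := aux_norm (by norm_num) hL hsn σ hσ
  have hcr := crit8 hL σ hfix hper
  have hf : ∀ a b : L, kdim σ (-a, -b, 1) = 3 → _ := fun a b h =>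
    alg8f σ hper a b ((hcr a b).1 h).1 ((hcr a b).1 h).2.1 ((hcr a b).1 h).2.2 _ rfl
  obtain ⟨d1, d2⟩ := dvd_norm (K := K) (L := L) (by norm_num) hL
  rw [← aux_count (L := L) _ d1 d2, ← Nat.card_prod]
  have hbk := fun (t : {t : L // t ^ 2 - t + 1 = 0 ∧ σ t = 1 - t})
    (a : {a : L // a ^ ((Fintype.card K ^ 8 - 1) / (Fintype.card K - 1)) = 1}) =>
    alg8b σ hper a.1 _ t.1 t.2.1 t.2.2 (by rw [hN]; exact a.2) rfl
  refine Nat.card_congr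
    { toFun := fun z => (⟨z.1.1 * (σ ^ 3) z.1.1 * (σ ^ 5) z.1.2, (hf _ _ z.2).1⟩,
        ⟨z.1.1, by rw [← hN]; exact (hf _ _ z.2).2.1⟩)
      invFun := fun w => ⟨(w.2.1, (1 - w.1.1) / ((σ ^ 3) w.2.1 * (σ ^ 6) w.2.1)),
        (hcr _ _).2 ⟨(hbk w.1 w.2).1, (hbk w.1 w.2).2.1, (hbk w.1 w.2).2.2.1⟩⟩
      left_inv := fun z => by
        have := (hf _ _ z.2).2.2
        ext
        · rfl
        · exact this.symm
      right_inv := fun w => by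
        have := (hbk w.1 w.2).2.2.2
        ext
        · exact this.symm
        · rfl }

theorem tcube (q s : ℕ) (σ : L ≃ₐ[K] L) (hσ : ∀ x : L, σ x = x ^ q ^ s) (t : L)
    (h : t ^ 2 - t + 1 = 0) :
    (q ^ s % 3 = 1 → σ t = t) ∧ (q ^ s % 3 = 2 → σ t = 1 - t) := by
  have h3 : (-t) ^ 3 = 1 := by linear_combination -(t + 1) * h
  have hs : σ t = - (-t) ^ q ^ s := by rw [← hσ, map_neg, neg_neg]
  rw [hs]
  constructor
  · intro hm
    rw [← Nat.div_add_mod (q ^ s) 3, hm, pow_add, pow_mul, h3]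
    simp
  · intro hm
    rw [← Nat.div_add_mod (q ^ s) 3, hm, pow_add, pow_mul, h3]
    simp
    linear_combination -h

theorem cast0 : ((Fintype.card K : ℕ) : L) = 0 := by
  have : ((Fintype.card K : ℕ) : K) = 0 := FiniteField.cast_card_eq_zero K
  have h := congrArg (algebraMap K L) this
  rwa [map_natCast, map_zero] at h
end

/-- (Corollary `cor:C3n`.) With `σ : x ↦ x^{q^s}`, `gcd(s,n) = 1`, a
generator of `Gal(F_{q^n}/F_q)`, and `D` the number of codewords of rank weight `n-3` in
`⟨x, x^σ, x^{σ³}⟩_{F_{q^n}}`: `D = 0` for `n ∈ {4,5}`; `D = (q⁶-1)(q³+1)` for `n = 6`;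
for `n = 7`, `D = 0` if `q` is odd and `D = (q⁷-1)²/(q-1)` if `q` is even; for `n = 8`,
`D = 0` if `q ≡ 1 (mod 3)`, `D = (q⁸-1)²/(q-1)` if `q ≡ 0 (mod 3)`, and
`D = 2(q⁸-1)²/(q-1)` if `q ≡ 2 (mod 3)`. -/
theorem stmt_15 (p q : ℕ) (hp : p.Prime) (hq : ∃ m : ℕ, 0 < m ∧ q = p ^ m)
    (K L : Type*) [Field K] [Field L] [Fintype K] [Fintype L] [Algebra K L]
    (hcardK : Fintype.card K = q)
    (n : ℕ) (hn : 0 < n) (hcardL : Fintype.card L = q ^ n)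
    (s : ℕ) (hs : 0 < s) (hsn : Nat.gcd s n = 1)
    (σ : L ≃ₐ[K] L) (hσ : ∀ x : L, σ x = x ^ q ^ s) :
    (n = 4 → weightCount3 K L σ = 0)
      ∧ (n = 5 → weightCount3 K L σ = 0)
      ∧ (n = 6 → weightCount3 K L σ = (q ^ 6 - 1) * (q ^ 3 + 1))
      ∧ (n = 7 →
          (Odd q → weightCount3 K L σ = 0)
            ∧ (Even q → weightCount3 K L σ = (q ^ 7 - 1) ^ 2 / (q - 1)))
      ∧ (n = 8 →
          (q % 3 = 1 → weightCount3 K L σ = 0)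
            ∧ (q % 3 = 0 → weightCount3 K L σ = (q ^ 8 - 1) ^ 2 / (q - 1))
            ∧ (q % 3 = 2 → weightCount3 K L σ = 2 * ((q ^ 8 - 1) ^ 2 / (q - 1)))) := by
  subst hcardK
  have hfix := aux_fix_dim hcardL hsn σ hσ
  have hper := aux_per hcardL σ hσ
  have hred := fun h4 => aux_red (n := n) h4 hcardL σ hfix
  have hc0 := cast0 (K := K) (L := L)
  have hdiv : ∀ n, (Fintype.card K ^ n - 1) ^ 2 / (Fintype.card K - 1) =
      (Fintype.card K ^ n - 1) * ((Fintype.card K ^ n - 1) / (Fintype.card K - 1)) := fun n => by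
    rw [sq, Nat.mul_div_assoc _ (Nat.sub_one_dvd_pow_sub_one _ _)]
  have hprime : ∀ r : ℕ, r.Prime → r ∣ Fintype.card K → (r : L) = 0 := by
    intro r hr hrd
    obtain ⟨m, hm, hqm⟩ := hq
    rw [hqm] at hrd hc0
    have := (Nat.prime_dvd_prime_iff_eq hr hp).1 (hr.dvd_of_dvd_pow hrd)
    subst this
    push_cast at hc0
    exact eq_zero_of_pow_eq_zero hc0
  refine ⟨?_, ?_, ?_, ?_, ?_⟩
  · rintro rfl
    have : IsEmpty {ab : L × L // kdim σ (-ab.1, -ab.2, 1) = 3} :=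
      ⟨fun z => crit4 hcardL σ hfix hper _ _ z.2⟩
    rw [hred (by norm_num), Nat.card_of_isEmpty, mul_zero]
  · rintro rfl
    have : IsEmpty {ab : L × L // kdim σ (-ab.1, -ab.2, 1) = 3} :=
      ⟨fun z => crit5 hcardL σ hfix hper _ _ z.2⟩
    rw [hred (by norm_num), Nat.card_of_isEmpty, mul_zero]
  · rintro rfl
    rw [hred (by norm_num), cnt6 hcardL hsn σ hσ]
  · rintro rfl
    constructor
    · intro hodd
      have : IsEmpty {ab : L × L // kdim σ (-ab.1, -ab.2, 1) = 3} := ⟨fun z => by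
        have h2 := ((alg7 σ hper _ _).1 ((crit7 hcardL σ hfix hper _ _).1 z.2)).1
        obtain ⟨k, hk⟩ := hodd
        rw [hk] at hc0
        push_cast at hc0
        rw [h2] at hc0
        simp at hc0⟩
      rw [hred (by norm_num), Nat.card_of_isEmpty, mul_zero]
    · intro heven
      have h2 : (2 : L) = 0 := by exact_mod_cast hprime 2 Nat.prime_two heven.two_dvd
      rw [hred (by norm_num), cnt7 hcardL hsn σ hσ h2, hdiv]
  · rintro rfl
    have hsodd : Odd s := by
      by_contra h
      rw [Nat.not_odd_iff_even] at h
      have h2 : 2 ∣ Nat.gcd s 8 := Nat.dvd_gcd h.two_dvd (by norm_num)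
      omega
    rw [hred (by norm_num), cnt8 hcardL hsn σ hσ, hdiv]
    refine ⟨?_, ?_, ?_⟩
    · intro hm
      have : IsEmpty {t : L // t ^ 2 - t + 1 = 0 ∧ σ t = 1 - t} := ⟨fun ⟨t, h1, h2⟩ => by
        have h3 := (tcube _ s σ hσ t h1).1 (by simp [Nat.pow_mod, hm])
        have h4 : t = 1 - t := h3.symm.trans h2
        have h5 : (3 : L) = 0 := by linear_combination 4 * h1 - (2 * t - 1) * h4
        rw [← Nat.div_add_mod (Fintype.card K) 3, hm] at hc0
        push_cast at hc0
        rw [h5] at hc0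
        simp at hc0⟩
      rw [Nat.card_of_isEmpty, zero_mul, mul_zero]
    · intro hm
      have h3 : (3 : L) = 0 := by
        exact_mod_cast hprime 3 Nat.prime_three (Nat.dvd_of_mod_eq_zero hm)
      have : Nat.card {t : L // t ^ 2 - t + 1 = 0 ∧ σ t = 1 - t} = 1 := by
        rw [Nat.card_eq_one_iff_unique]
        refine ⟨⟨fun ⟨t, h1, _⟩ ⟨u, h2, _⟩ => ?_⟩, ⟨⟨-1, ?_, ?_⟩⟩⟩
        · have key : ∀ t : L, t ^ 2 - t + 1 = 0 → t = -1 := by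
            intro t ht
            have : (t + 1) ^ 2 = 0 := by linear_combination ht + t * h3
            exact eq_neg_of_add_eq_zero_left (eq_zero_of_pow_eq_zero this)
          ext
          exact (key t h1).trans (key u h2).symm
        · linear_combination h3
        · rw [map_neg, map_one]; linear_combination -h3
      rw [this, one_mul]
    · intro hm
      have h3 : (3 : L) ≠ 0 := by
        intro h3
        rw [← Nat.div_add_mod (Fintype.card K) 3, hm] at hc0
        push_cast at hc0
        rw [h3] at hc0
        have : (1 : L) = 0 := by linear_combination h3 - hc0
        simp at this
      have hqs : Fintype.card K ^ s % 3 = 2 := by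
        obtain ⟨k, rfl⟩ := hsodd
        rw [Nat.pow_mod, hm, pow_succ, pow_mul, Nat.mul_mod, Nat.pow_mod]
        simp
      have h31 : 3 ∣ Fintype.card L - 1 := by
        rw [hcardL]
        have : Fintype.card K ^ 8 % 3 = 1 := by rw [Nat.pow_mod, hm]
        omega
      obtain ⟨w, hw⟩ := aux_prim (L := L) 3 h31
      have hw3 : w ^ 3 = 1 := hw.pow_eq_one
      have hw1 : w ≠ 1 := hw.ne_one (by norm_num)
      have hw2 : w ^ 2 + w + 1 = 0 := by
        apply mul_left_cancel₀ (sub_ne_zero.2 hw1)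
        linear_combination hw3
      have hset : {t : L | t ^ 2 - t + 1 = 0 ∧ σ t = 1 - t} = {-w, 1 + w} := by
        ext t
        simp only [Set.mem_setOf_eq, Set.mem_insert_iff, Set.mem_singleton_iff]
        constructor
        · rintro ⟨h1, -⟩
          have : (t + w) * (t - (1 + w)) = 0 := by linear_combination h1 - hw2
          rcases mul_eq_zero.1 this with h | h
          · left; linear_combination h
          · right; linear_combination h
        · intro h
          have h1 : t ^ 2 - t + 1 = 0 := by
            rcases h with rfl | rfl
            · linear_combination hw2
            · linear_combination hw2
          exact ⟨h1, (tcube _ s σ hσ t h1).2 hqs⟩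
      have hne : -w ≠ 1 + w := by
        intro h
        apply h3
        linear_combination 4 * hw2 + (2 * w + 1) * h
      have : Nat.card {t : L // t ^ 2 - t + 1 = 0 ∧ σ t = 1 - t} = 2 := by
        have h := Set.ncard_pair hne
        rw [← hset] at h
        exact h
      rw [this]; ring
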